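/- arXiv:2501.07147 — 5 statements merged into one kernel-verified Lean document; each statement's English description precedes it below -/
import Mathlib

section
/- Let (X,d,μ) be a metric measure space, where μ is a Borel measure that is positive and finite on open balls, satisfying the relative lower volume decay of order Q: there exist constants C_Q > 0 and Q > 1 such that (r/R)^Q ≤ C_Q · μ(B(y,r))/μ(B(z,R)) whenever 0 < r ≤ R and y ∈ B(z,R). Let λ ≥ 1, let G ⊆ X be a Borel set, and let x, x' ∈ X and r > 0 satisfy d(x,x') ≤ 8λr and μ(B(x', 9λr) ∩ G) ≤ μ(B(x', 9λr)) / ((20λ)^Q · C_Q). Then μ(B(x,r) ∩ G) ≤ μ(B(x,r))/2. -/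
open MeasureTheory Metric

/-!
Volume decay bounds the measure of a large ball by a multiple of the measure of a small ball inside
it. Hence a set of relative measure at most `ε` in `ball z R` has relative measure at most
`ε * C * (R / r) ^ Q` in every `ball y r` with `dist y z + r ≤ R`. For `R = 9 * lam * r` and
`ε = ((20 * lam) ^ Q * C)⁻¹` this is `(9 / 20) ^ Q`, which is at most `1 / 2` because `1 ≤ Q`.
-/

/-- Relative lower volume decay of order `Q` with constant `C`: the relative measure of a ball
`ball y r` centred in a larger ball `ball z R` is at least `C⁻¹ * (r / R) ^ Q`. The inequality is
cross-multiplied, so that it never divides by a measure, which may be `0` or `∞`. -/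
def HasRelativeLowerVolumeDecay {X : Type*} [PseudoMetricSpace X] [MeasurableSpace X]
    (μ : Measure X) (C Q : ℝ) : Prop :=
  ∀ (z y : X) (r R : ℝ), 0 < r → r ≤ R → y ∈ ball z R →
    ENNReal.ofReal ((r / R) ^ Q) * μ (ball z R) ≤ ENNReal.ofReal C * μ (ball y r)

section

variable {X : Type*} [PseudoMetricSpace X] [MeasurableSpace X] {μ : Measure X} {C Q : ℝ}

namespace HasRelativeLowerVolumeDecay

theorem measure_ball_le (h : HasRelativeLowerVolumeDecay μ C Q) {y z : X} {r R : ℝ}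
    (hr : 0 < r) (hrR : r ≤ R) (hy : y ∈ ball z R) :
    μ (ball z R) ≤ ENNReal.ofReal (C * (R / r) ^ Q) * μ (ball y r) := by
  have hR : 0 < R := hr.trans_le hrR
  have ratio_mul : (R / r) ^ Q * (r / R) ^ Q = 1 := by
    rw [← Real.mul_rpow (by positivity) (by positivity), div_mul_div_cancel₀ hr.ne',
      div_self hR.ne', Real.one_rpow]
  have ratio_nonneg : 0 ≤ (R / r) ^ Q := by positivity
  calc
    μ (ball z R)
        = ENNReal.ofReal ((R / r) ^ Q) * (ENNReal.ofReal ((r / R) ^ Q) * μ (ball z R)) := by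
      rw [← mul_assoc, ← ENNReal.ofReal_mul ratio_nonneg, ratio_mul, ENNReal.ofReal_one, one_mul]
    _ ≤ ENNReal.ofReal ((R / r) ^ Q) * (ENNReal.ofReal C * μ (ball y r)) := by
      gcongr ENNReal.ofReal ((R / r) ^ Q) * ?_
      exact h z y r R hr hrR hy
    _ = ENNReal.ofReal (C * (R / r) ^ Q) * μ (ball y r) := by
      rw [← mul_assoc, ← ENNReal.ofReal_mul ratio_nonneg, mul_comm C]

theorem measure_ball_inter_le (h : HasRelativeLowerVolumeDecay μ C Q) {y z : X} {r R : ℝ}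
    (hr : 0 < r) (hyz : dist y z + r ≤ R) {G : Set X} {ε : ENNReal}
    (hG : μ (ball z R ∩ G) ≤ ε * μ (ball z R)) :
    μ (ball y r ∩ G) ≤ ε * ENNReal.ofReal (C * (R / r) ^ Q) * μ (ball y r) := by
  have hsub : ball y r ⊆ ball z R := ball_subset_ball' (by linarith)
  have hrR : r ≤ R := (le_add_of_nonneg_left dist_nonneg).trans hyz
  calc
    μ (ball y r ∩ G) ≤ μ (ball z R ∩ G) := by gcongr
    _ ≤ ε * μ (ball z R) := hG
    _ ≤ ε * (ENNReal.ofReal (C * (R / r) ^ Q) * μ (ball y r)) := by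
      gcongr
      exact h.measure_ball_le hr hrR (hsub (mem_ball_self hr))
    _ = ε * ENNReal.ofReal (C * (R / r) ^ Q) * μ (ball y r) := (mul_assoc _ _ _).symm

end HasRelativeLowerVolumeDecay

theorem ball_inter_le_half_of_density_general (hC : 0 < C) (hQ : 1 ≤ Q)
    (hdecay : HasRelativeLowerVolumeDecay μ C Q) {lam : ℝ} (hlam : 1 ≤ lam) {G : Set X}
    {x x' : X} {r : ℝ} (hr : 0 < r) (hd : dist x x' ≤ 8 * lam * r)
    (hsmall : μ (ball x' (9 * lam * r) ∩ G) ≤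
      μ (ball x' (9 * lam * r)) / ENNReal.ofReal ((20 * lam) ^ Q * C)) :
    μ (ball x r ∩ G) ≤ μ (ball x r) / 2 := by
  have hlam_pos : 0 < lam := one_pos.trans_le hlam
  have hdist : dist x x' + r ≤ 9 * lam * r := by
    linarith [le_mul_of_one_le_left hr.le hlam]
  have hconst : ((20 * lam) ^ Q * C)⁻¹ * (C * (9 * lam * r / r) ^ Q) ≤ 2⁻¹ := calc
    _ = (9 * lam) ^ Q / (20 * lam) ^ Q := by
      rw [mul_div_cancel_right₀ _ hr.ne']
      field_simp
    _ = (9 / 20) ^ Q := by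
      rw [← Real.div_rpow (by positivity) (by positivity), mul_div_mul_right _ _ hlam_pos.ne']
    _ ≤ 9 / 20 := Real.rpow_le_self_of_le_one (by norm_num) (by norm_num) hQ
    _ ≤ 2⁻¹ := by norm_num
  rw [ENNReal.div_eq_inv_mul, ← ENNReal.ofReal_inv_of_pos (by positivity)] at hsmall
  calc
    μ (ball x r ∩ G)
        ≤ ENNReal.ofReal ((20 * lam) ^ Q * C)⁻¹ * ENNReal.ofReal (C * (9 * lam * r / r) ^ Q) *
          μ (ball x r) :=
      hdecay.measure_ball_inter_le hr hdist hsmall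
    _ ≤ ENNReal.ofReal 2⁻¹ * μ (ball x r) := by
      rw [← ENNReal.ofReal_mul (by positivity)]
      gcongr
    _ = μ (ball x r) / 2 := by
      rw [ENNReal.ofReal_inv_of_pos two_pos, ENNReal.ofReal_ofNat, ENNReal.div_eq_inv_mul]

end

/-- Key density estimate (Lemma 3.1 of the paper): in a metric measure
space whose measure is positive and finite on balls and satisfies a relative lower volume
decay of order `Q`, if `G` has small relative measure in the ball `B(x', 9λr)` and
`d(x,x') ≤ 8λr`, then `G` covers at most half of `B(x,r)`. -/
theorem ball_inter_le_half_of_density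
    {X : Type*} [MetricSpace X] [MeasurableSpace X] [BorelSpace X]
    (μ : Measure X)
    (hball : ∀ (x : X) (r : ℝ), 0 < r → 0 < μ (ball x r) ∧ μ (ball x r) < ⊤)
    (C_Q Q : ℝ) (hCQ : 0 < C_Q) (hQ : 1 < Q)
    (hdecay : ∀ (z y : X) (r R : ℝ), 0 < r → r ≤ R → y ∈ ball z R →
      ENNReal.ofReal ((r / R) ^ Q) * μ (ball z R) ≤ ENNReal.ofReal C_Q * μ (ball y r))
    (lam : ℝ) (hlam : 1 ≤ lam)
    (G : Set X) (hG : MeasurableSet G)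
    (x x' : X) (r : ℝ) (hr : 0 < r)
    (hd : dist x x' ≤ 8 * lam * r)
    (hsmall : μ (ball x' (9 * lam * r) ∩ G) ≤
      μ (ball x' (9 * lam * r)) / ENNReal.ofReal ((20 * lam) ^ Q * C_Q)) :
    μ (ball x r ∩ G) ≤ μ (ball x r) / 2 :=
  ball_inter_le_half_of_density_general hCQ hQ.le hdecay hlam hr hd hsmall
end

section
/- Let (X,d,μ) be a metric measure space, where μ is a Borel measure that is positive and finite on open balls. Let f, g : X → ℝ be μ-measurable functions and let x ∈ X. Suppose that for every δ > 0, lim_{r→0} μ({y ∈ B(x,r) : |f(y) − g(y)| > δ}) / μ(B(x,r)) = 0. Then f^∨(x) = g^∨(x) and f^∧(x) = g^∧(x), where the equalities are understood in the extended reals. -/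
open MeasureTheory Metric Filter Topology

/-- The upper approximate limit `f^∨(x)` of a function `f` at `x`, valued in the
extended reals (with the convention `inf ∅ = +∞`). -/
noncomputable def upperApproxLimit {X : Type*} [MetricSpace X] [MeasurableSpace X]
    (μ : Measure X) (f : X → ℝ) (x : X) : EReal :=
  sInf ((fun t : ℝ => (t : EReal)) ''
    {t : ℝ | Tendsto (fun r : ℝ => μ {y | y ∈ ball x r ∧ t < f y} / μ (ball x r))
      (𝓝[>] (0 : ℝ)) (𝓝 0)})

/-- The lower approximate limit `f^∧(x)` of a function `f` at `x`, valued in the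
extended reals (with the convention `sup ∅ = -∞`). -/
noncomputable def lowerApproxLimit {X : Type*} [MetricSpace X] [MeasurableSpace X]
    (μ : Measure X) (f : X → ℝ) (x : X) : EReal :=
  sSup ((fun t : ℝ => (t : EReal)) ''
    {t : ℝ | Tendsto (fun r : ℝ => μ {y | y ∈ ball x r ∧ f y < t} / μ (ball x r))
      (𝓝[>] (0 : ℝ)) (𝓝 0)})

/-!
The sets whose complement has density zero at `x` form a filter, and `f^∨(x)` and `f^∧(x)` are the
limit superior and the limit inferior of `f` along it. Approximate equality at `x` says that `f - g`
tends to zero along this filter, and adding a null function changes neither limit.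
-/

section Limsup

variable {α : Type*} {F : Filter α}

theorem limsup_coe_eq_sInf (u : α → ℝ) :
    limsup (fun a => (u a : EReal)) F =
      sInf ((fun t : ℝ => (t : EReal)) '' {t : ℝ | ∀ᶠ a in F, u a ≤ t}) := by
  apply le_antisymm
  · apply le_sInf
    rintro _ ⟨t, ht, rfl⟩
    exact limsup_le_of_le (h := ht.mono fun a ha => EReal.coe_le_coe ha)
  · refine EReal.le_of_forall_lt_iff_le.1 fun t ht => sInf_le ⟨t, ?_, rfl⟩
    exact (eventually_lt_of_limsup_lt ht).mono fun a ha => (EReal.coe_lt_coe_iff.1 ha).le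

theorem liminf_coe_eq_sSup (u : α → ℝ) :
    liminf (fun a => (u a : EReal)) F =
      sSup ((fun t : ℝ => (t : EReal)) '' {t : ℝ | ∀ᶠ a in F, t ≤ u a}) := by
  apply le_antisymm
  · refine EReal.ge_of_forall_gt_iff_ge.1 fun t ht => le_sSup ⟨t, ?_, rfl⟩
    exact (eventually_lt_of_lt_liminf ht).mono fun a ha => (EReal.coe_lt_coe_iff.1 ha).le
  · apply sSup_le
    rintro _ ⟨t, ht, rfl⟩
    exact le_liminf_of_le (h := ht.mono fun a ha => EReal.coe_le_coe ha)

variable [NeBot F]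

theorem limsup_add_eq_of_tendsto_zero {u v : α → EReal} (hu : Tendsto u F (𝓝 0)) :
    limsup (u + v) F = limsup v F := by
  apply le_antisymm
  · simpa [hu.limsup_eq] using EReal.limsup_add_le (u := u) (v := v) (f := F)
  · simpa [hu.liminf_eq, add_comm v u] using EReal.le_limsup_add (u := v) (v := u) (f := F)

theorem liminf_add_eq_of_tendsto_zero {u v : α → EReal} (hu : Tendsto u F (𝓝 0)) :
    liminf (u + v) F = liminf v F := by
  apply le_antisymm
  · simpa [hu.limsup_eq] using EReal.liminf_add_le (u := u) (v := v) (f := F)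
  · simpa [hu.liminf_eq] using EReal.le_liminf_add (u := u) (v := v) (f := F)

end Limsup

section DensityFilter

variable {X : Type*} [PseudoMetricSpace X] [MeasurableSpace X]

/-- The filter of sets whose complement has `μ`-density zero at `x`; eventuality along it means
"approximately at `x`". The complement need not be measurable: `μ` is read as an outer measure. -/
noncomputable def densityFilter (μ : Measure X) (x : X) : Filter X :=
  comk (fun s => Tendsto (fun r : ℝ => μ (ball x r ∩ s) / μ (ball x r)) (𝓝[>] 0) (𝓝 0))
    (by simp)
    (fun t ht s hst => tendsto_of_tendsto_of_tendsto_of_le_of_le tendsto_const_nhds ht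
      (fun _ => zero_le) fun r => by dsimp only; gcongr)
    (fun s hs t ht => by
      have hadd := hs.add ht
      rw [add_zero] at hadd
      refine tendsto_of_tendsto_of_tendsto_of_le_of_le tendsto_const_nhds hadd
        (fun _ => zero_le) fun r => ?_
      dsimp only
      rw [← ENNReal.add_div, Set.inter_union_distrib_left]
      gcongr
      exact measure_union_le _ _)

variable {μ : Measure X} {x : X}

theorem eventually_densityFilter {p : X → Prop} :
    (∀ᶠ y in densityFilter μ x, p y) ↔
      Tendsto (fun r : ℝ => μ {y | y ∈ ball x r ∧ ¬p y} / μ (ball x r)) (𝓝[>] 0) (𝓝 0) :=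
  Iff.rfl

theorem densityFilter_neBot
    (hball : ∃ᶠ r in 𝓝[>] (0 : ℝ), μ (ball x r) ≠ 0 ∧ μ (ball x r) ≠ ⊤) :
    NeBot (densityFilter μ x) := by
  refine neBot_iff.2 fun hbot => ?_
  have hempty : ∀ᶠ _ in densityFilter μ x, False := by simp [hbot]
  have hratio : Tendsto (fun r : ℝ => μ (ball x r) / μ (ball x r)) (𝓝[>] 0) (𝓝 0) := by
    simpa only [eventually_densityFilter, not_false_eq_true, and_true, Set.ofPred_mem_eq]
      using hempty
  obtain ⟨r, ⟨hpos, hfin⟩, hlt⟩ :=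
    (hball.and_eventually (hratio.eventually_lt_const one_pos)).exists
  exact hlt.ne (ENNReal.div_self hpos hfin)

theorem tendsto_sub_densityFilter_iff {f g : X → ℝ} :
    Tendsto (fun y => f y - g y) (densityFilter μ x) (𝓝 0) ↔ ∀ δ : ℝ, 0 < δ →
      Tendsto (fun r : ℝ => μ {y | y ∈ ball x r ∧ δ < |f y - g y|} / μ (ball x r))
        (𝓝[>] (0 : ℝ)) (𝓝 0) := by
  simp only [nhds_basis_closedBall.tendsto_right_iff, mem_closedBall_zero_iff, Real.norm_eq_abs,
    eventually_densityFilter, not_le]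

end DensityFilter

section ApproxLimit

variable {X : Type*} [MetricSpace X] [MeasurableSpace X]

theorem upperApproxLimit_eq_limsup (μ : Measure X) (f : X → ℝ) (x : X) :
    upperApproxLimit μ f x = limsup (fun y => (f y : EReal)) (densityFilter μ x) := by
  simp only [upperApproxLimit, limsup_coe_eq_sInf, eventually_densityFilter, not_le]

theorem lowerApproxLimit_eq_liminf (μ : Measure X) (f : X → ℝ) (x : X) :
    lowerApproxLimit μ f x = liminf (fun y => (f y : EReal)) (densityFilter μ x) := by
  simp only [lowerApproxLimit, liminf_coe_eq_sSup, eventually_densityFilter, not_le]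

theorem approxLimit_eq_of_approx_eq_general (μ : Measure X) (f g : X → ℝ) (x : X)
    (hball : ∀ᶠ r in 𝓝[>] (0 : ℝ), μ (ball x r) ≠ 0 ∧ μ (ball x r) ≠ ⊤)
    (h : ∀ δ : ℝ, 0 < δ →
      Tendsto (fun r : ℝ => μ {y | y ∈ ball x r ∧ δ < |f y - g y|} / μ (ball x r))
        (𝓝[>] (0 : ℝ)) (𝓝 0)) :
    upperApproxLimit μ f x = upperApproxLimit μ g x ∧
    lowerApproxLimit μ f x = lowerApproxLimit μ g x := by
  have := densityFilter_neBot hball.frequently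
  have hsub : Tendsto (fun y => ((f y - g y : ℝ) : EReal)) (densityFilter μ x) (𝓝 0) :=
    EReal.tendsto_coe.2 (tendsto_sub_densityFilter_iff.2 h)
  have hf : (fun y => (f y : EReal)) =
      (fun y => ((f y - g y : ℝ) : EReal)) + fun y => (g y : EReal) := by
    ext y
    rw [Pi.add_apply, ← EReal.coe_add, sub_add_cancel]
  simp only [upperApproxLimit_eq_limsup, lowerApproxLimit_eq_liminf]
  rw [hf]
  exact ⟨limsup_add_eq_of_tendsto_zero hsub, liminf_add_eq_of_tendsto_zero hsub⟩

end ApproxLimit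

/-- If `f` and `g` are approximately equal at `x`, in the sense that for
every `δ > 0` the relative measure of `{y ∈ B(x,r) : |f y - g y| > δ}` in `B(x,r)` tends
to `0` as `r → 0⁺`, then the upper and lower approximate limits of `f` and `g` at `x`
coincide. -/
theorem approxLimit_eq_of_approx_eq
    {X : Type*} [MetricSpace X] [MeasurableSpace X] [BorelSpace X]
    (μ : Measure X)
    (hball : ∀ (x : X) (r : ℝ), 0 < r → 0 < μ (ball x r) ∧ μ (ball x r) < ⊤)
    (f g : X → ℝ) (hf : Measurable f) (hg : Measurable g) (x : X)
    (h : ∀ δ : ℝ, 0 < δ →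
      Tendsto (fun r : ℝ => μ {y | y ∈ ball x r ∧ δ < |f y - g y|} / μ (ball x r))
        (𝓝[>] (0 : ℝ)) (𝓝 0)) :
    upperApproxLimit μ f x = upperApproxLimit μ g x ∧
    lowerApproxLimit μ f x = lowerApproxLimit μ g x := by
  exact approxLimit_eq_of_approx_eq_general μ f g x
    (eventually_mem_nhdsWithin.mono fun r hr => ⟨(hball x r hr).1.ne', (hball x r hr).2.ne⟩) h
end

section
/- Let O=(0,0), A=(0,1), C=(1,1) in ℝ², let X := [O,A] ∪ [O,C] be the union of the closed line segments from O to A and from O to C, let μ := H¹⌊X be the 1-dimensional Hausdorff measure restricted to X, and let f := χ_{[O,A]}. Then for every x ∈ [O,A] with x ≠ O, the non-centered maximal function satisfies Mf(x) = 1. -/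
open MeasureTheory Metric Filter Topology
open scoped ENNReal

noncomputable section

/-- The point `O = (0,0)` in the plane. -/
def ptO : EuclideanSpace ℝ (Fin 2) := !₂[0, 0]
/-- The point `A = (0,1)` in the plane. -/
def ptA : EuclideanSpace ℝ (Fin 2) := !₂[0, 1]
/-- The point `C = (1,1)` in the plane. -/
def ptC : EuclideanSpace ℝ (Fin 2) := !₂[1, 1]

/-- The space `X = [O,A] ∪ [O,C]`, the union of the two closed segments. -/
def Xsp : Set (EuclideanSpace ℝ (Fin 2)) := segment ℝ ptO ptA ∪ segment ℝ ptO ptC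

/-- The measure `μ = H¹⌊X`, the `1`-dimensional Hausdorff measure restricted to `X`. -/
def μX : Measure (EuclideanSpace ℝ (Fin 2)) := (μH[1]).restrict Xsp

/-- The function `f = χ_{[O,A]}`. -/
def fX : EuclideanSpace ℝ (Fin 2) → ℝ≥0∞ := (segment ℝ ptO ptA).indicator 1

/-- The non-centered maximal function of `f` on the metric measure space `(X, d₂, μ)`:
`Mf(x) = sup { (1/μ(B(z,r))) ∫_{B(z,r)} f dμ : z ∈ X, r > 0, x ∈ B(z,r) }`. -/
def Mmax (x : EuclideanSpace ℝ (Fin 2)) : ℝ≥0∞ :=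
  ⨆ (z ∈ Xsp) (r : ℝ) (_ : 0 < r) (_ : x ∈ ball z r),
    (∫⁻ y in ball z r, fX y ∂μX) / μX (ball z r)

/-!
A point `x ≠ O` of `[O,A]` has positive distance to the closed segment `[O,C]`, because the two
segments meet only at `O`. Hence `f` is `μ`-almost everywhere `1` on every small ball around `x`.
Such a ball has positive finite measure, so the corresponding average is `1`, and no average of `f`
exceeds `1`.
-/

lemma laverage_le_of_forall_le {α : Type*} [MeasurableSpace α] {μ : Measure α} {f : α → ℝ≥0∞}
    {c : ℝ≥0∞} (hf : ∀ y, f y ≤ c) : ⨍⁻ y, f y ∂μ ≤ c := by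
  rw [laverage_eq]
  refine ENNReal.div_le_of_le_mul ?_
  calc ∫⁻ y, f y ∂μ ≤ ∫⁻ _, c ∂μ := lintegral_mono hf
    _ = c * μ Set.univ := lintegral_const c

section MaximalFunction

variable {α : Type*} [PseudoMetricSpace α] [MeasurableSpace α]
  {μ : Measure α} {X : Set α} {f : α → ℝ≥0∞} {c : ℝ≥0∞} {x : α} {r : ℝ}

/-- The non-centered maximal function of `f` on the subspace `X` of `α`, with respect to `μ`: the
supremum of the averages of `f` over the balls containing the given point whose centre lies in `X`.
The balls are those of `α`, so they represent the balls of `X` when `μ` is concentrated on `X`. -/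
def noncenteredMaximal (μ : Measure α) (X : Set α) (f : α → ℝ≥0∞) (x : α) : ℝ≥0∞ :=
  ⨆ (z ∈ X) (r : ℝ) (_ : 0 < r) (_ : x ∈ ball z r), ⨍⁻ y in ball z r, f y ∂μ

lemma setLAverage_ball_le_noncenteredMaximal {z : α} (hz : z ∈ X) (hx : x ∈ ball z r) :
    ⨍⁻ y in ball z r, f y ∂μ ≤ noncenteredMaximal μ X f x :=
  le_iSup₂_of_le z hz <| le_iSup₂_of_le r (pos_of_mem_ball hx) <| le_iSup_of_le hx le_rfl

lemma noncenteredMaximal_le_of_forall_le (hf : ∀ y, f y ≤ c) : noncenteredMaximal μ X f x ≤ c :=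
  iSup₂_le fun _ _ ↦ iSup₂_le fun _ _ ↦ iSup_le fun _ ↦ laverage_le_of_forall_le hf

lemma noncenteredMaximal_eq_of_ae_eq_on_ball (hf : ∀ y, f y ≤ c) (hx : x ∈ X) (hr : 0 < r)
    (hfc : ∀ᵐ y ∂μ.restrict (ball x r), f y = c)
    (hpos : μ (ball x r) ≠ 0) (hfin : μ (ball x r) ≠ ∞) :
    noncenteredMaximal μ X f x = c := by
  refine (noncenteredMaximal_le_of_forall_le hf).antisymm ?_
  calc c = ⨍⁻ _ in ball x r, c ∂μ := (setLAverage_const hpos hfin c).symm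
    _ = ⨍⁻ y in ball x r, f y ∂μ := (laverage_congr hfc).symm
    _ ≤ noncenteredMaximal μ X f x := setLAverage_ball_le_noncenteredMaximal hx (mem_ball_self hr)

end MaximalFunction

lemma nontrivial_inter_of_mem_nhds {α : Type*} [TopologicalSpace α] [T1Space α] {s U : Set α}
    {x : α} (hs : IsPreconnected s) (hs' : s.Nontrivial) (hx : x ∈ s) (hU : U ∈ 𝓝 x) :
    (s ∩ U).Nontrivial := by
  obtain ⟨y, ⟨hyU, hys⟩, hyx⟩ := accPt_iff_nhds.1 (hs.preperfect_of_nontrivial hs' x hx) U hU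
  exact ⟨y, ⟨hys, hyU⟩, x, ⟨hx, mem_of_mem_nhds hU⟩, hyx⟩

lemma isClosed_segment {E : Type*} [AddCommGroup E] [Module ℝ E] [TopologicalSpace E]
    [IsTopologicalAddGroup E] [ContinuousSMul ℝ E] [T2Space E] (a b : E) :
    IsClosed (segment ℝ a b) := by
  rw [← convexHull_pair]
  exact ((Set.toFinite _).isCompact_convexHull ℝ).isClosed

section HausdorffMeasure

variable {E : Type*} [NormedAddCommGroup E] [NormedSpace ℝ E] [MeasurableSpace E] [BorelSpace E]

lemma hausdorffMeasure_one_pos_of_convex {s : Set E} (hs : Convex ℝ s) (hs' : s.Nontrivial) :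
    0 < μH[1] s := by
  obtain ⟨a, ha, b, hb, hab⟩ := hs'
  calc 0 < edist a b := edist_pos.2 hab
    _ = μH[1] (segment ℝ a b) := (hausdorffMeasure_segment a b).symm
    _ ≤ μH[1] s := measure_mono (hs.segment_subset ha hb)

lemma hausdorffMeasure_one_inter_ball_pos {s : Set E} {x : E} {r : ℝ} (hs : Convex ℝ s)
    (hs' : s.Nontrivial) (hx : x ∈ s) (hr : 0 < r) : 0 < μH[1] (s ∩ ball x r) :=
  hausdorffMeasure_one_pos_of_convex (hs.inter (convex_ball x r))
    (nontrivial_inter_of_mem_nhds hs.isPreconnected hs' hx (ball_mem_nhds x hr))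

theorem Mmax_eq_one_on_segment_general {a b x : E} {T : Set E} (hab : a ≠ b) (hT : IsClosed T)
    (hx : x ∈ segment ℝ a b) (hxT : x ∉ T) :
    noncenteredMaximal (μH[1].restrict (segment ℝ a b ∪ T)) (segment ℝ a b ∪ T)
      ((segment ℝ a b).indicator 1) x = 1 := by
  set S := segment ℝ a b
  obtain ⟨r, hr, hrT⟩ := Metric.isOpen_iff.1 hT.isOpen_compl x hxT
  have hX : MeasurableSet (S ∪ T) := (isClosed_segment a b).measurableSet.union hT.measurableSet
  have hball : ball x r ∩ (S ∪ T) = S ∩ ball x r := by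
    rw [Set.inter_union_distrib_left, (Set.subset_compl_iff_disjoint_right.1 hrT).inter_eq,
      Set.union_empty, Set.inter_comm]
  have hμ : μH[1].restrict (S ∪ T) (ball x r) = μH[1] (S ∩ ball x r) := by
    rw [Measure.restrict_apply measurableSet_ball, hball]
  refine noncenteredMaximal_eq_of_ae_eq_on_ball (Set.indicator_le_self' fun _ _ ↦ zero_le)
    (Or.inl hx) hr ?_ ?_ ?_
  · filter_upwards [ae_restrict_mem measurableSet_ball, ae_restrict_of_ae (ae_restrict_mem hX)]
      with y hy hyX
    exact Set.indicator_of_mem (hball.subset ⟨hy, hyX⟩).1 1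
  · rw [hμ]
    have hS : S.Nontrivial := ⟨a, left_mem_segment ℝ a b, b, right_mem_segment ℝ a b, hab⟩
    exact (hausdorffMeasure_one_inter_ball_pos (convex_segment a b) hS hx hr).ne'
  · rw [hμ]
    refine measure_ne_top_of_subset Set.inter_subset_left ?_
    rw [hausdorffMeasure_segment]
    exact edist_ne_top a b

end HausdorffMeasure

lemma Mmax_eq_noncenteredMaximal : Mmax = noncenteredMaximal μX Xsp fX := by
  ext x
  simp only [Mmax, noncenteredMaximal, setLAverage_eq]

lemma segment_ptO_ptA_inter_segment_ptO_ptC :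
    segment ℝ ptO ptA ∩ segment ℝ ptO ptC = {ptO} := by
  refine segment_inter_eq_endpoint_of_linearIndependent_sub ℝ (LinearIndependent.pair_iff.2 ?_)
  intro s t hst
  have ht : t = 0 := by simpa [ptO, ptA, ptC] using congrArg (· 0) hst
  have hs : s + t = 0 := by simpa [ptO, ptA, ptC] using congrArg (· 1) hst
  exact ⟨by simpa [ht] using hs, ht⟩

lemma ptO_ne_ptA : ptO ≠ ptA := fun h ↦ by simpa [ptO, ptA] using congrArg (· 1) h

/-- For every `x ∈ [O,A]` with `x ≠ O`, the non-centered maximal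
function of `f = χ_{[O,A]}` on `(X, d₂, H¹⌊X)` satisfies `Mf(x) = 1`. -/
theorem Mmax_eq_one_on_segment (x : EuclideanSpace ℝ (Fin 2))
    (hx : x ∈ segment ℝ ptO ptA) (hxO : x ≠ ptO) :
    Mmax x = 1 := by
  have hxC : x ∉ segment ℝ ptO ptC := fun h ↦
    hxO (segment_ptO_ptA_inter_segment_ptO_ptC.subset ⟨hx, h⟩)
  rw [Mmax_eq_noncenteredMaximal]
  exact Mmax_eq_one_on_segment_general ptO_ne_ptA (isClosed_segment ptO ptC) hx hxC

end
end

section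
/- Let O=(0,0), A=(0,1), C=(1,1) in ℝ², and let H¹ denote 1-dimensional Hausdorff measure on ℝ². Then for every z on the closed segment [O,C] and every ρ > |z| (so that O ∈ B(z,ρ)), one has H¹(B(z,ρ) ∩ [O,A]) ≤ H¹(B(z,ρ) ∩ [O,C]). Consequently, with μ := H¹⌊([O,A] ∪ [O,C]) and f := χ_{[O,A]}, one has (1/μ(B(z,ρ))) ∫_{B(z,ρ)} f dμ ≤ 1/2. -/
open MeasureTheory Metric Filter Topology
open scoped ENNReal

noncomputable section

/-! On a segment issuing from `o`, the distance between two points is the difference of their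
distances to `o`, so `dist · o` maps the segment isometrically onto an interval. By the reverse
triangle inequality, replacing a point of `[o, a]` by the point of `[o, c]` equally far from `o`
does not increase its distance to a center `z ∈ [o, c]`. Hence the interval image of
`B(z, ρ) ∩ [o, a]` lies in that of `B(z, ρ) ∩ [o, c]`. -/

section Segment

variable {E : Type*} [NormedAddCommGroup E] [NormedSpace ℝ E] {o a c z : E}

lemma dist_eq_abs_dist_sub_dist_of_mem_segment {x y : E} (hx : x ∈ segment ℝ o c)
    (hy : y ∈ segment ℝ o c) : dist x y = |dist x o - dist y o| := by
  rw [segment_eq_image_lineMap] at hx hy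
  obtain ⟨s, ⟨hs, -⟩, rfl⟩ := hx
  obtain ⟨t, ⟨ht, -⟩, rfl⟩ := hy
  rw [dist_lineMap_lineMap, dist_lineMap_left, dist_lineMap_left, Real.norm_of_nonneg hs,
    Real.norm_of_nonneg ht, ← sub_mul, abs_mul, abs_of_nonneg dist_nonneg, Real.dist_eq]

lemma Icc_zero_dist_subset_image_dist_segment (o c : E) :
    Set.Icc 0 (dist c o) ⊆ (dist · o) '' segment ℝ o c := by
  have hcont : ContinuousOn (dist · o) (segment ℝ o c) := by fun_prop
  simpa only [dist_self] using (convex_segment o c).isPreconnected.intermediate_value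
    (left_mem_segment ℝ o c) (right_mem_segment ℝ o c) hcont

lemma image_dist_ball_inter_segment_subset (h : dist a o ≤ dist c o) (hz : z ∈ segment ℝ o c)
    (ρ : ℝ) :
    (dist · o) '' (ball z ρ ∩ segment ℝ o a) ⊆ (dist · o) '' (ball z ρ ∩ segment ℝ o c) := by
  rintro _ ⟨p, ⟨hpz, hpa⟩, rfl⟩
  have hpo : dist p o ≤ dist c o := by
    rw [dist_comm a] at h
    exact (segment_subset_closedBall_left o a hpa).trans h
  obtain ⟨q, hq, hqp : dist q o = dist p o⟩ :=
    Icc_zero_dist_subset_image_dist_segment o c ⟨dist_nonneg, hpo⟩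
  refine ⟨q, ⟨?_, hq⟩, hqp⟩
  calc dist q z = |dist p o - dist z o| := by
        rw [dist_eq_abs_dist_sub_dist_of_mem_segment hq hz, hqp]
    _ ≤ dist p z := abs_dist_sub_le p z o
    _ < ρ := hpz

lemma isCompact_segment (x y : E) : IsCompact (segment ℝ x y) := by
  rw [segment_eq_image_lineMap]
  exact isCompact_Icc.image (by fun_prop)

variable [MeasurableSpace E] [BorelSpace E]

lemma hausdorffMeasure_image_dist_of_subset_segment {d : ℝ} (hd : 0 ≤ d) {s : Set E}
    (hs : s ⊆ segment ℝ o c) : μH[d] ((dist · o) '' s) = μH[d] s := by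
  have hdist : Isometry fun x : s ↦ dist (x : E) o := Isometry.of_dist_eq fun x y ↦
    (dist_eq_abs_dist_sub_dist_of_mem_segment (hs x.2) (hs y.2)).symm
  calc μH[d] ((dist · o) '' s) = μH[d] ((fun x : s ↦ dist (x : E) o) '' Set.univ) := by
        rw [Set.image_univ, Set.image_eq_range]
    _ = μH[d] (((↑) : s → E) '' Set.univ) := by
        rw [hdist.hausdorffMeasure_image (.inl hd),
          isometry_subtype_coe.hausdorffMeasure_image (.inl hd)]
    _ = μH[d] s := by rw [Subtype.coe_image_univ]

lemma hausdorffMeasure_ball_inter_segment_le {d : ℝ} (hd : 0 ≤ d) (h : dist a o ≤ dist c o)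
    (hz : z ∈ segment ℝ o c) (ρ : ℝ) :
    μH[d] (ball z ρ ∩ segment ℝ o a) ≤ μH[d] (ball z ρ ∩ segment ℝ o c) := by
  rw [← hausdorffMeasure_image_dist_of_subset_segment hd Set.inter_subset_right,
    ← hausdorffMeasure_image_dist_of_subset_segment hd Set.inter_subset_right]
  exact measure_mono (image_dist_ball_inter_segment_subset h hz ρ)

end Segment

lemma setLIntegral_indicator_one_le_half_of_measure_inter_le {α : Type*} [MeasurableSpace α]
    {μ : Measure α} {b s t : Set α} (hs : MeasurableSet s) (ht : MeasurableSet t)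
    (hst : AEDisjoint μ s t) (h : μ (b ∩ s) ≤ μ (b ∩ t)) :
    ∫⁻ x in b, s.indicator 1 x ∂μ.restrict (s ∪ t) ≤ 1 / 2 * μ.restrict (s ∪ t) b := by
  have hmass : μ.restrict (s ∪ t) b = μ (b ∩ s) + μ (b ∩ t) := by
    rw [Measure.restrict_union₀ hst ht.nullMeasurableSet, Measure.add_apply,
      Measure.restrict_apply' hs, Measure.restrict_apply' ht]
  calc ∫⁻ x in b, s.indicator 1 x ∂μ.restrict (s ∪ t) = μ (b ∩ s) := by
        rw [lintegral_indicator_one hs, Measure.restrict_apply hs,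
          Measure.restrict_apply' (hs.union ht), Set.inter_comm s b, Set.inter_assoc,
          Set.inter_eq_left.2 Set.subset_union_left]
    _ = 1 / 2 * (μ (b ∩ s) + μ (b ∩ s)) := by
        rw [mul_add, ← add_mul, ENNReal.add_halves, one_mul]
    _ ≤ 1 / 2 * μ.restrict (s ∪ t) b := by
        rw [hmass]
        gcongr

/-- The bound on the average is multiplied out, so that it does not rest on `0 / 0 = 0` when the
ball is null. -/
theorem average_le_half_of_center_on_OC_general {E : Type*} [NormedAddCommGroup E]
    [NormedSpace ℝ E] [MeasurableSpace E] [BorelSpace E] {o a c z : E}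
    (hac : segment ℝ o a ∩ segment ℝ o c = {o}) (h : dist a o ≤ dist c o)
    (hz : z ∈ segment ℝ o c) (ρ : ℝ) :
    μH[1] (ball z ρ ∩ segment ℝ o a) ≤ μH[1] (ball z ρ ∩ segment ℝ o c) ∧
    ∫⁻ y in ball z ρ, (segment ℝ o a).indicator 1 y
        ∂(μH[1]).restrict (segment ℝ o a ∪ segment ℝ o c) ≤
      1 / 2 * (μH[1]).restrict (segment ℝ o a ∪ segment ℝ o c) (ball z ρ) := by
  have hle := hausdorffMeasure_ball_inter_segment_le zero_le_one h hz ρ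
  have hdisj : AEDisjoint μH[1] (segment ℝ o a) (segment ℝ o c) := by
    have := Measure.nullSingletonClass_hausdorff E one_pos
    rw [AEDisjoint, hac, measure_singleton]
  exact ⟨hle, setLIntegral_indicator_one_le_half_of_measure_inter_le
    (isCompact_segment o a).measurableSet (isCompact_segment o c).measurableSet hdisj hle⟩

lemma dist_ptA_ptO_le_dist_ptC_ptO : dist ptA ptO ≤ dist ptC ptO := by
  simp [EuclideanSpace.dist_eq, ptO, ptA, ptC]

/-- For every `z ∈ [O,C]` and every `ρ > |z|` (so that `O ∈ B(z,ρ)`),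
one has `H¹(B(z,ρ) ∩ [O,A]) ≤ H¹(B(z,ρ) ∩ [O,C])`, and consequently the average of
`f = χ_{[O,A]}` over `B(z,ρ)` with respect to `μ = H¹⌊X` is at most `1/2`. -/
theorem average_le_half_of_center_on_OC (z : EuclideanSpace ℝ (Fin 2))
    (hz : z ∈ segment ℝ ptO ptC) (ρ : ℝ) (hρ : dist z ptO < ρ) :
    μH[1] (ball z ρ ∩ segment ℝ ptO ptA) ≤ μH[1] (ball z ρ ∩ segment ℝ ptO ptC) ∧
    (∫⁻ y in ball z ρ, fX y ∂μX) / μX (ball z ρ) ≤ 1 / 2 := by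
  obtain ⟨hle, hint⟩ := average_le_half_of_center_on_OC_general
    segment_ptO_ptA_inter_segment_ptO_ptC dist_ptA_ptO_le_dist_ptC_ptO hz ρ
  exact ⟨hle, ENNReal.div_le_of_le_mul hint⟩

end
end

section
/- Let O=(0,0), A=(0,1), C=(1,1) in ℝ², X := [O,A] ∪ [O,C], μ := H¹⌊X, and f := χ_{[O,A]}. Then for every z on the closed segment [O,A] and every ρ > |z| (so that O ∈ B(z,ρ)), one has (1/μ(B(z,ρ))) ∫_{B(z,ρ)} f dμ ≤ 2/(2+√2). -/
open MeasureTheory Metric Filter Topology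
open scoped ENNReal

noncomputable section

/-!
If `s • A` lies in the ball then so does its projection `(s / 2) • C` onto the line `OC`: it is a
vertex of the square with diagonal `[O, s • A]`, and the one nearer to `z` as `0 ≤ z 0`. By the
British flag theorem its squared distance to `z` is at most the mean of those of `O` and `s • A`.
Thus `s • A ↦ (s / 2) • C`, which scales lengths by `√2 / 2`, maps `[O, A] ∩ B(z, ρ)` into
`[O, C] ∩ B(z, ρ)`, and the average of `f` is at most `1 / (1 + √2 / 2)`.
-/

lemma div_add_le_div_add_of_mul_le_mul {p q x y : ℝ≥0∞} (hp : p ≠ ∞) (hq₀ : q ≠ 0) (hq : q ≠ ∞)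
    (h : p * x ≤ q * y) : x / (x + y) ≤ q / (q + p) := by
  apply ENNReal.div_le_of_le_mul
  rw [mul_comm, ← mul_div_assoc, ENNReal.le_div_iff_mul_le (by simp [hq₀]) (by simp [hp, hq])]
  calc x * (q + p) = x * q + p * x := by ring
    _ ≤ x * q + q * y := by gcongr
    _ = (x + y) * q := by ring

lemma measurableSet_segment {E : Type*} [AddCommGroup E] [Module ℝ E] [TopologicalSpace E]
    [IsTopologicalAddGroup E] [ContinuousSMul ℝ E] [T2Space E] [MeasurableSpace E]
    [OpensMeasurableSpace E] (x y : E) : MeasurableSet (segment ℝ x y) := by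
  rw [segment_eq_image]
  exact (isCompact_Icc.image (by fun_prop)).measurableSet

section NormedSpace

variable {E : Type*} [NormedAddCommGroup E] [NormedSpace ℝ E] [MeasurableSpace E] [BorelSpace E]

lemma edist_mul_hausdorffMeasure_segment_inter_le {o a b : E} {B : Set E}
    (h : ∀ s ∈ Set.Icc (0 : ℝ) 1, AffineMap.lineMap o a s ∈ B → AffineMap.lineMap o b s ∈ B) :
    edist o b * μH[1] (segment ℝ o a ∩ B) ≤ edist o a * μH[1] (segment ℝ o b ∩ B) := by
  set S : Set ℝ := Set.Icc 0 1 ∩ AffineMap.lineMap o a ⁻¹' B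
  have hlength (x : E) : μH[1] (AffineMap.lineMap o x '' S) = edist o x * μH[1] S := by
    rw [hausdorffMeasure_lineMap_image, edist_nndist, ENNReal.smul_def, smul_eq_mul]
  have hsource : segment ℝ o a ∩ B = AffineMap.lineMap o a '' S := by
    rw [segment_eq_image_lineMap, Set.image_inter_preimage]
  have htarget : AffineMap.lineMap o b '' S ⊆ segment ℝ o b ∩ B := by
    rintro _ ⟨s, ⟨hs, hsB⟩, rfl⟩
    exact ⟨segment_eq_image_lineMap ℝ o b ▸ Set.mem_image_of_mem _ hs, h s hs hsB⟩
  calc edist o b * μH[1] (segment ℝ o a ∩ B)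
      = edist o a * μH[1] (AffineMap.lineMap o b '' S) := by
        rw [hsource, hlength, hlength, mul_left_comm]
    _ ≤ edist o a * μH[1] (segment ℝ o b ∩ B) := by gcongr

lemma hausdorffMeasure_segment_union_inter {a c : E} (hac : LinearIndependent ℝ ![a, c])
    {B : Set E} (hB : MeasurableSet B) :
    μH[1] ((segment ℝ 0 a ∪ segment ℝ 0 c) ∩ B) =
      μH[1] (segment ℝ 0 a ∩ B) + μH[1] (segment ℝ 0 c ∩ B) := by
  have hinter : segment ℝ 0 a ∩ segment ℝ 0 c = {0} :=
    segment_inter_eq_endpoint_of_linearIndependent_sub ℝ (by simpa only [sub_zero] using hac)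
  have := Measure.nullSingletonClass_hausdorff E one_pos
  rw [Set.union_inter_distrib_right]
  refine measure_union₀ ((measurableSet_segment 0 c).inter hB).nullMeasurableSet ?_
  refine measure_mono_null (t := {0}) ?_ (measure_singleton 0)
  rw [← hinter]
  gcongr <;> exact Set.inter_subset_left

end NormedSpace

section InnerProductSpace

variable {E : Type*} [NormedAddCommGroup E] [InnerProductSpace ℝ E] {a c z : E} {ρ : ℝ}

lemma two_mul_norm_half_smul_sub_sq_le (hc : ‖c‖ ^ 2 ≤ 2 * ‖a‖ ^ 2)
    (hz : inner ℝ a z ≤ inner ℝ c z) :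
    2 * ‖(1 / 2 : ℝ) • c - z‖ ^ 2 ≤ ‖z‖ ^ 2 + ‖a - z‖ ^ 2 := by
  rw [norm_sub_sq_real, norm_sub_sq_real, norm_smul, real_inner_smul_left,
    Real.norm_of_nonneg one_half_pos.le]
  linarith

lemma half_smul_mem_ball (hc : ‖c‖ ^ 2 ≤ 2 * ‖a‖ ^ 2) (hz : inner ℝ a z ≤ inner ℝ c z)
    (h₀ : 0 ∈ ball z ρ) (ha : a ∈ ball z ρ) : (1 / 2 : ℝ) • c ∈ ball z ρ := by
  rw [mem_ball_iff_norm] at h₀ ha ⊢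
  rw [zero_sub, norm_neg] at h₀
  have hz_sq : ‖z‖ ^ 2 < ρ ^ 2 := by gcongr
  have ha_sq : ‖a - z‖ ^ 2 < ρ ^ 2 := by gcongr
  have hρ : 0 ≤ ρ := (norm_nonneg z).trans h₀.le
  refine lt_of_pow_lt_pow_left₀ 2 hρ ?_
  linarith [two_mul_norm_half_smul_sub_sq_le hc hz]

lemma smul_half_smul_mem_ball (hc : ‖c‖ ^ 2 ≤ 2 * ‖a‖ ^ 2) (hz : inner ℝ a z ≤ inner ℝ c z)
    (h₀ : 0 ∈ ball z ρ) {s : ℝ} (hs : 0 ≤ s) (ha : s • a ∈ ball z ρ) :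
    s • (1 / 2 : ℝ) • c ∈ ball z ρ := by
  rw [smul_comm]
  refine half_smul_mem_ball ?_ ?_ h₀ ha
  · rw [norm_smul, norm_smul, mul_pow, mul_pow, mul_left_comm]
    gcongr
  · rw [real_inner_smul_left, real_inner_smul_left]
    gcongr

variable [MeasurableSpace E] [BorelSpace E]

lemma enorm_mul_hausdorffMeasure_segment_inter_ball_le (hc : ‖c‖ ^ 2 ≤ 2 * ‖a‖ ^ 2)
    (hz : inner ℝ a z ≤ inner ℝ c z) (h₀ : 0 ∈ ball z ρ) :
    ‖c‖ₑ * μH[1] (segment ℝ 0 a ∩ ball z ρ) ≤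
      2 * ‖a‖ₑ * μH[1] (segment ℝ 0 c ∩ ball z ρ) := by
  have hhalf : ‖c‖ₑ = 2 * ‖(1 / 2 : ℝ) • c‖ₑ := by
    have htwo : ‖(2 : ℝ)‖ₑ = 2 := by simp [Real.enorm_eq_ofReal]
    simp [enorm_smul, ← mul_assoc, htwo, ENNReal.mul_inv_cancel]
  have hsegment : segment ℝ 0 ((1 / 2 : ℝ) • c) ⊆ segment ℝ 0 c := by
    have hc₀ := left_mem_segment ℝ 0 c
    refine (convex_segment 0 c).segment_subset hc₀ ?_
    exact (convex_segment 0 c).smul_mem_of_zero_mem hc₀ (right_mem_segment ℝ 0 c)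
      ⟨by norm_num, by norm_num⟩
  have hscaled := edist_mul_hausdorffMeasure_segment_inter_le (o := 0) (a := a)
    (b := (1 / 2 : ℝ) • c) (B := ball z ρ) fun s hs ha ↦ by
      simp only [AffineMap.lineMap_apply_module, smul_zero, zero_add] at ha ⊢
      exact smul_half_smul_mem_ball hc hz h₀ hs.1 ha
  rw [edist_zero_left, edist_zero_left] at hscaled
  calc ‖c‖ₑ * μH[1] (segment ℝ 0 a ∩ ball z ρ)
      = 2 * (‖(1 / 2 : ℝ) • c‖ₑ * μH[1] (segment ℝ 0 a ∩ ball z ρ)) := by rw [hhalf, mul_assoc]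
    _ ≤ 2 * (‖a‖ₑ * μH[1] (segment ℝ 0 ((1 / 2 : ℝ) • c) ∩ ball z ρ)) :=
        mul_le_mul_right hscaled 2
    _ ≤ 2 * ‖a‖ₑ * μH[1] (segment ℝ 0 c ∩ ball z ρ) := by
        rw [mul_assoc]
        gcongr

lemma hausdorffMeasure_segment_inter_ball_div_le (hac : LinearIndependent ℝ ![a, c])
    (hc : ‖c‖ ^ 2 ≤ 2 * ‖a‖ ^ 2) (hz : inner ℝ a z ≤ inner ℝ c z) (h₀ : 0 ∈ ball z ρ) :
    μH[1] (segment ℝ 0 a ∩ ball z ρ) / μH[1] ((segment ℝ 0 a ∪ segment ℝ 0 c) ∩ ball z ρ) ≤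
      2 * ‖a‖ₑ / (2 * ‖a‖ₑ + ‖c‖ₑ) := by
  have ha : a ≠ 0 := hac.ne_zero 0
  rw [hausdorffMeasure_segment_union_inter hac measurableSet_ball]
  exact div_add_le_div_add_of_mul_le_mul enorm_ne_top (by simpa using ha)
    (ENNReal.mul_ne_top ENNReal.ofNat_ne_top enorm_ne_top)
    (enorm_mul_hausdorffMeasure_segment_inter_ball_le hc hz h₀)

end InnerProductSpace

lemma ptO_eq_zero : ptO = 0 := by
  ext i
  fin_cases i <;> rfl

lemma norm_ptA : ‖ptA‖ = 1 := by
  simp [EuclideanSpace.norm_eq, ptA]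

lemma norm_ptC : ‖ptC‖ = √2 := by
  simp [EuclideanSpace.norm_eq, ptC, one_add_one_eq_two]

lemma linearIndependent_ptA_ptC : LinearIndependent ℝ ![ptA, ptC] := by
  refine LinearIndependent.pair_iff.mpr fun s t h ↦ ?_
  have ht : t = 0 := by simpa [ptA, ptC] using congrArg (· 0) h
  have hst : s + t = 0 := by simpa [ptA, ptC] using congrArg (· 1) h
  exact ⟨by linarith, ht⟩

lemma inner_ptA_le_inner_ptC {z : EuclideanSpace ℝ (Fin 2)} (hz : 0 ≤ z 0) :
    inner ℝ ptA z ≤ inner ℝ ptC z := by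
  simpa [PiLp.inner_apply, ptA, ptC] using hz

lemma apply_zero_of_mem_segment_ptO_ptA {z : EuclideanSpace ℝ (Fin 2)}
    (hz : z ∈ segment ℝ ptO ptA) : z 0 = 0 := by
  obtain ⟨s, t, -, -, -, rfl⟩ := hz
  simp [ptO, ptA]

lemma setLIntegral_fX_div_μX {B : Set (EuclideanSpace ℝ (Fin 2))} (hB : MeasurableSet B) :
    (∫⁻ y in B, fX y ∂μX) / μX B = μH[1] (segment ℝ ptO ptA ∩ B) / μH[1] (Xsp ∩ B) := by
  have hOA := measurableSet_segment ptO ptA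
  have hsub : segment ℝ ptO ptA ∩ B ⊆ Xsp :=
    Set.inter_subset_left.trans Set.subset_union_left
  rw [fX, lintegral_indicator_one hOA, Measure.restrict_apply hOA, μX,
    Measure.restrict_apply (hOA.inter hB), Measure.restrict_apply hB,
    Set.inter_eq_left.mpr hsub, Set.inter_comm B]

theorem average_le_of_center_on_OA_general (z : EuclideanSpace ℝ (Fin 2)) (hz : 0 ≤ z 0) (ρ : ℝ)
    (hρ : dist z ptO < ρ) :
    (∫⁻ y in ball z ρ, fX y ∂μX) / μX (ball z ρ) ≤
      ENNReal.ofReal (2 / (2 + Real.sqrt 2)) := by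
  have hO : 0 ∈ ball z ρ := by rwa [mem_ball', ← ptO_eq_zero]
  have hnorm : ‖ptC‖ ^ 2 ≤ 2 * ‖ptA‖ ^ 2 := by simp [norm_ptA, norm_ptC]
  have hratio : 2 * ‖ptA‖ₑ / (2 * ‖ptA‖ₑ + ‖ptC‖ₑ) = ENNReal.ofReal (2 / (2 + √2)) := by
    rw [← ofReal_norm, ← ofReal_norm, norm_ptA, norm_ptC,
      ENNReal.ofReal_div_of_pos (by positivity),
      ENNReal.ofReal_add zero_le_two (Real.sqrt_nonneg 2)]
    simp
  rw [setLIntegral_fX_div_μX measurableSet_ball, Xsp, ptO_eq_zero, ← hratio]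
  exact hausdorffMeasure_segment_inter_ball_div_le linearIndependent_ptA_ptC hnorm
    (inner_ptA_le_inner_ptC hz) hO

/-- For every `z ∈ [O,A]` and every `ρ > |z|` (so that `O ∈ B(z,ρ)`),
the average of `f = χ_{[O,A]}` over `B(z,ρ)` with respect to `μ = H¹⌊X` is at most
`2/(2+√2)`. -/
theorem average_le_of_center_on_OA (z : EuclideanSpace ℝ (Fin 2))
    (hz : z ∈ segment ℝ ptO ptA) (ρ : ℝ) (hρ : dist z ptO < ρ) :
    (∫⁻ y in ball z ρ, fX y ∂μX) / μX (ball z ρ) ≤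
      ENNReal.ofReal (2 / (2 + Real.sqrt 2)) :=
  average_le_of_center_on_OA_general z (apply_zero_of_mem_segment_ptO_ptA hz).ge ρ hρ

end
end
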